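/- arXiv:1802.00588 — 6 statements merged into one kernel-verified Lean document; each statement's English description precedes it below -/
import Mathlib

section
/- The five assumptions below jointly imply RSC^DC_MD. Assume all traces produced by the target semantics contain no Undef events, and: (1) Back-translation: there is a function ↑ mapping a finite prefix m and an interface i to a source component ↑(m,i) : i such that for every finite interface set I, every whole target program W : I, and every defined finite prefix m with W ⇝* m, the source program {↑(m,i) | i ∈ I} satisfies I and {↑(m,i) | i ∈ I} ⇝* m. (2) Forward compiler correctness with separate compilation: for all compatible source programs C : I_C and P : I_P and every defined finite prefix m, (C ∪ P) ⇝* m implies (C↓ ∪ P↓) ⇝* m. (3) Recomposition: for all source programs P, P' : I_P, every target program C_T : I_C, every source program C_S : I_C, and every finite prefix m, if (C_T ∪ P↓) ⇝* m and (C_S↓ ∪ P'↓) ⇝* m then (C_S↓ ∪ P↓) ⇝* m. (4) Backward compiler correctness with separate compilation and undefined behavior: for all source programs C, P and every finite prefix m, (C↓ ∪ P↓) ⇝* m implies there is a trace t with (C ∪ P) ⇝ t and (m ≤ t or t ≺ m). (5) Blame: for all C_S : I_C, P, P' : I_P, every defined finite prefix m, and every trace t, if (C_S ∪ P') ⇝*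 m, (C_S ∪ P) ⇝ t, and t ≺ m, then m ≤ t or t ≺_{I_P} m. Then the compilation chain satisfies RSC^DC_MD with the back-translation ↑ from assumption (1). -/
/-!
A defined prefix `m` of `C_T ∪ P↓` can be back-translated to a source program `C_S ∪ P'` producing
`m`, where `C_S : I_C` and `P' : I_P`. Forward correctness makes `C_S↓ ∪ P'↓` produce `m`, and
recomposition with `C_T ∪ P↓` makes `C_S↓ ∪ P↓` produce `m`. Backward correctness then yields a
trace of `C_S ∪ P` that either extends `m` or stops early in undefined behavior; in the latter case,
blame (comparing with `C_S ∪ P'`) attributes that behavior to an interface in `I_P`. Prefixes of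
target traces are defined because target traces contain no `Undef`.
-/

/-!
STATEMENT 1: the five assumptions (back-translation, forward compiler
correctness, recomposition, backward compiler correctness, blame), together
with the fact that target traces contain no Undef events, imply RSC^DC_MD.
-/

namespace Stmt1

/-- A trace is either a finite list of events or an infinite sequence of events. -/
abbrev Trace (E : Type) := List E ⊕ (ℕ → E)

/-- `prefixOf m t`: the finite trace prefix `m` is a prefix of the trace `t`. -/
def prefixOf {E : Type} (m : List E) : Trace E → Prop
  | .inl l => m <+: l
  | .inr f => ∀ i (h : i < m.length), m.get ⟨i, h⟩ = f i

/-- `e` is an `Undef` event. -/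
def isUndef {E I : Type} (undef : I → E) (e : E) : Prop := ∃ i, e = undef i

/-- Well-formedness of traces: an `Undef` event occurs at most once and only as
the last event of a (finite) trace. -/
def wfTrace {E I : Type} (undef : I → E) : Trace E → Prop
  | .inl l => ∀ i (h : i < l.length), isUndef undef (l.get ⟨i, h⟩) → i + 1 = l.length
  | .inr f => ∀ n, ¬ isUndef undef (f n)

/-- A trace contains no `Undef` events at all. -/
def noUndef {E I : Type} (undef : I → E) : Trace E → Prop
  | .inl l => ∀ e ∈ l, ¬ isUndef undef e
  | .inr f => ∀ n, ¬ isUndef undef (f n)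

/-- A finite prefix is *defined* if it contains no `Undef` event. -/
def definedPre {E I : Type} (undef : I → E) (m : List E) : Prop :=
  ∀ e ∈ m, ¬ isUndef undef e

/-- `t ≺_i m` for a trace `t` and finite prefix `m`:
`t = m'·[Undef i]` for some finite `m' ≤ m`. -/
def precI {E I : Type} (undef : I → E) (i : I) (t : Trace E) (m : List E) : Prop :=
  ∃ m' : List E, t = Sum.inl (m' ++ [undef i]) ∧ m' <+: m

/-- `t ≺_i m` where both `t` and `m` are finite prefixes. -/
def precIList {E I : Type} (undef : I → E) (i : I) (t m : List E) : Prop :=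
  ∃ m' : List E, t = m' ++ [undef i] ∧ m' <+: m

/-- `t ≺_{I_P} m`: `t ≺_i m` for some interface `i ∈ I_P`. -/
def precSet {E I : Type} (undef : I → E) (IP : Finset I) (t : Trace E) (m : List E) : Prop :=
  ∃ i ∈ IP, precI undef i t m

/-- `t ≺ m`: `t ≺_i m` for some interface `i`. -/
def precAny {E I : Type} (undef : I → E) (t : Trace E) (m : List E) : Prop :=
  ∃ i : I, precI undef i t m

/-- `W ⇝* m`: there is a trace `t` with `m ≤ t` and `W ⇝ t`. -/
def semStar {E A : Type} (sem : A → Trace E → Prop) (W : A) (m : List E) : Prop :=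
  ∃ t, prefixOf m t ∧ sem W t

/-- The compilation chain satisfies RSC^DC_MD with back-translation `bt`. -/
def RSCDCMD {E I SComp TComp : Type}
    [DecidableEq I] [DecidableEq SComp] [DecidableEq TComp]
    (undef : I → E) (sItf : SComp → I) (tItf : TComp → I)
    (compat : Finset I → Prop) (cc : SComp → TComp)
    (ssem : Finset SComp → Trace E → Prop)
    (tsem : Finset TComp → Trace E → Prop)
    (bt : List E → I → SComp) : Prop :=
  ∀ IP IC : Finset I, compat (IP ∪ IC) →
    ∀ P : Finset SComp, P.image sItf = IP →
    ∀ CT : Finset TComp, CT.image tItf = IC →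
    ∀ t : Trace E, tsem (CT ∪ P.image cc) t →
    ∀ m : List E, prefixOf m t →
    ∃ t' : Trace E, ssem (IC.image (fun i => bt m i) ∪ P) t' ∧
      (prefixOf m t' ∨ precSet undef IP t' m)

/-- The compilation chain satisfies RSCC. -/
def RSCC {E I SComp TComp : Type}
    [DecidableEq I] [DecidableEq SComp] [DecidableEq TComp]
    (undef : I → E) (sItf : SComp → I)
    (compat : Finset I → Prop) (cc : SComp → TComp)
    (ssem : Finset SComp → Trace E → Prop)
    (tsem : Finset TComp → Trace E → Prop) : Prop :=
  -- for all pairwise compatible interfaces I_1, …, I_n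
  ∀ (n : ℕ) (Itf : Fin n → I) (Cs : Fin n → SComp),
    compat (Finset.univ.image Itf) →
    -- and all source components C_1 : I_1, …, C_n : I_n
    (∀ j, sItf (Cs j) = Itf j) →
    -- for every finite trace prefix m with {C_1↓, …, C_n↓} ⇝* m
    ∀ m : List E, semStar tsem ((Finset.univ.image Cs).image cc) m →
    -- there exist distinct indices i_1, …, i_k
    ∃ (k : ℕ) (idx : Fin k → Fin n), Function.Injective idx ∧
    -- and source components A_{i_1} : I_{i_1}, …, A_{i_k} : I_{i_k}
    ∃ A : Fin k → SComp, (∀ j, sItf (A j) = Itf (idx j)) ∧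
    ∃ ms : Fin k → List E,
      -- (1) for every j ∈ {1, …, k} there is a finite prefix m_j with …
      (∀ j : Fin k,
        precIList undef (Itf (idx j)) (ms j) m ∧
        (∀ _ : 0 < j.1,
          precIList undef
            (Itf (idx ⟨j.1 - 1, lt_of_le_of_lt (Nat.sub_le _ _) j.isLt⟩))
            (ms ⟨j.1 - 1, lt_of_le_of_lt (Nat.sub_le _ _) j.isLt⟩)
            (ms j)) ∧
        semStar ssem
          (((Finset.univ.image Cs) \
              ((Finset.univ.filter (fun l : Fin k => l.1 < j.1)).image
                (fun l => Cs (idx l)))) ∪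
            ((Finset.univ.filter (fun l : Fin k => l.1 < j.1)).image A))
          (ms j)) ∧
      -- (2) replacing all compromised components reproduces the whole m
      semStar ssem
        (((Finset.univ.image Cs) \ (Finset.univ.image (fun l => Cs (idx l)))) ∪
          (Finset.univ.image A))
        m

theorem definedPre_of_prefixOf {E I : Type} {undef : I → E} {m : List E} {t : Trace E}
    (hmt : prefixOf m t) (ht : noUndef undef t) : definedPre undef m := by
  intro e he
  cases t with
  | inl l => exact ht e (List.IsPrefix.subset hmt he)
  | inr f =>
    obtain ⟨i, hi, rfl⟩ := List.mem_iff_getElem.mp he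
    have getElem_eq : m[i] = f i := hmt i hi
    exact getElem_eq ▸ ht i

theorem image_image_of_leftInverse {α β : Type*} [DecidableEq α] [DecidableEq β] {f : α → β}
    {g : β → α} (h : Function.LeftInverse g f) (s : Finset α) : (s.image f).image g = s := by
  rw [Finset.image_image, h.comp_eq_id, Finset.image_id]

section CompilationChain

variable {E I SComp TComp : Type}

section Assumptions

variable (undef : I → E) (sItf : SComp → I) (tItf : TComp → I) (compat : Finset I → Prop)
  (cc : SComp → TComp) (ssem : Finset SComp → Trace E → Prop) (tsem : Finset TComp → Trace E → Prop)
  (bt : List E → I → SComp)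

/-- Back-translation (assumption 1): a whole target program with a defined prefix `m` is simulated
on `m` by the components `bt m i`, with `i` ranging over its interfaces. That `bt m i` has
interface `i` is not part of this definition. -/
def BackTranslates [DecidableEq I] [DecidableEq SComp] : Prop :=
  ∀ (W : Finset TComp) (m : List E), definedPre undef m → semStar tsem W m →
    semStar ssem ((W.image tItf).image (bt m)) m

/-- Forward compiler correctness with separate compilation (assumption 2). Here and in the notions
below, `P : I_P` is encoded by writing `P.image sItf` for `I_P`. -/
def ForwardCorrect [DecidableEq I] [DecidableEq SComp] [DecidableEq TComp] : Prop :=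
  ∀ C P : Finset SComp, compat (C.image sItf ∪ P.image sItf) →
    ∀ m : List E, definedPre undef m →
      semStar ssem (C ∪ P) m → semStar tsem (C.image cc ∪ P.image cc) m

/-- Recomposition (assumption 3): two target programs with the same prefix, each split into a
context and a program, still have it when the context of one is linked with the program of the
other. -/
def Recomposes [DecidableEq I] [DecidableEq TComp] : Prop :=
  ∀ (P P' CS : Finset SComp) (CT : Finset TComp),
    P'.image sItf = P.image sItf → CS.image sItf = CT.image tItf →
    ∀ m : List E, semStar tsem (CT ∪ P.image cc) m →
      semStar tsem (CS.image cc ∪ P'.image cc) m → semStar tsem (CS.image cc ∪ P.image cc) m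

/-- Backward compiler correctness with separate compilation, up to undefined behavior of the source
program (assumption 4). -/
def BackwardCorrect [DecidableEq SComp] [DecidableEq TComp] : Prop :=
  ∀ (C P : Finset SComp) (m : List E), semStar tsem (C.image cc ∪ P.image cc) m →
    ∃ t, ssem (C ∪ P) t ∧ (prefixOf m t ∨ precAny undef t m)

/-- Blame (assumption 5): if `CS` can take part in producing a defined prefix `m`, then linking it
with another program `P` of the same interfaces can cut `m` short only by undefined behavior
of `P`. -/
def BlamesProgram [DecidableEq I] [DecidableEq SComp] : Prop :=
  ∀ CS P P' : Finset SComp, P'.image sItf = P.image sItf →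
    ∀ m : List E, definedPre undef m → ∀ t : Trace E,
      semStar ssem (CS ∪ P') m → ssem (CS ∪ P) t → precAny undef t m →
        prefixOf m t ∨ precSet undef (P.image sItf) t m

end Assumptions

variable {undef : I → E} {sItf : SComp → I} {tItf : TComp → I} {compat : Finset I → Prop}
  {cc : SComp → TComp} {ssem : Finset SComp → Trace E → Prop}
  {tsem : Finset TComp → Trace E → Prop} {bt : List E → I → SComp} {m : List E}

theorem image_tItf_union_image_cc [DecidableEq I] [DecidableEq TComp]
    (hcc : ∀ C, tItf (cc C) = sItf C) (CT : Finset TComp) (P : Finset SComp) :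
    (CT ∪ P.image cc).image tItf = CT.image tItf ∪ P.image sItf := by
  rw [Finset.image_union, Finset.image_image, show tItf ∘ cc = sItf from funext hcc]

theorem BackTranslates.semStar_union [DecidableEq I] [DecidableEq SComp] [DecidableEq TComp]
    (hbt : BackTranslates undef tItf ssem tsem bt) (hcc : ∀ C, tItf (cc C) = sItf C)
    {CT : Finset TComp} {P : Finset SComp} (hm : definedPre undef m)
    (htgt : semStar tsem (CT ∪ P.image cc) m) :
    semStar ssem ((CT.image tItf).image (bt m) ∪ (P.image sItf).image (bt m)) m := by
  rw [← Finset.image_union, ← image_tItf_union_image_cc hcc]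
  exact hbt _ m hm htgt

theorem Recomposes.semStar_replace_context
    [DecidableEq I] [DecidableEq SComp] [DecidableEq TComp]
    (hrecomp : Recomposes sItf tItf cc tsem)
    (hfcc : ForwardCorrect undef sItf compat cc ssem tsem)
    {CT : Finset TComp} {CS P P' : Finset SComp}
    (hcompat : compat (CT.image tItf ∪ P.image sItf))
    (hCS : CS.image sItf = CT.image tItf) (hP' : P'.image sItf = P.image sItf)
    (hm : definedPre undef m) (htgt : semStar tsem (CT ∪ P.image cc) m)
    (hsrc : semStar ssem (CS ∪ P') m) :
    semStar tsem (CS.image cc ∪ P.image cc) m := by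
  have hcompat' : compat (CS.image sItf ∪ P'.image sItf) := by rwa [hCS, hP']
  exact hrecomp P P' CS CT hP' hCS m htgt (hfcc CS P' hcompat' m hm hsrc)

theorem BackwardCorrect.exists_trace_of_blamesProgram
    [DecidableEq I] [DecidableEq SComp] [DecidableEq TComp]
    (hbcc : BackwardCorrect undef cc ssem tsem) (hblame : BlamesProgram undef sItf ssem)
    {CS P P' : Finset SComp} (hP' : P'.image sItf = P.image sItf) (hm : definedPre undef m)
    (htgt : semStar tsem (CS.image cc ∪ P.image cc) m) (hsrc : semStar ssem (CS ∪ P') m) :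
    ∃ t, ssem (CS ∪ P) t ∧ (prefixOf m t ∨ precSet undef (P.image sItf) t m) := by
  obtain ⟨t, ht, hprefix | hundef⟩ := hbcc CS P m htgt
  · exact ⟨t, ht, Or.inl hprefix⟩
  · exact ⟨t, ht, hblame CS P P' hP' m hm t hsrc ht hundef⟩

theorem assumptions_imply_rscdcmd_general
    [DecidableEq I] [DecidableEq SComp] [DecidableEq TComp]
    (hcc : ∀ C, tItf (cc C) = sItf C) (hbtItf : ∀ m i, sItf (bt m i) = i)
    (hbt : BackTranslates undef tItf ssem tsem bt)
    (hfcc : ForwardCorrect undef sItf compat cc ssem tsem)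
    (hrecomp : Recomposes sItf tItf cc tsem)
    (hbcc : BackwardCorrect undef cc ssem tsem)
    (hblame : BlamesProgram undef sItf ssem)
    {CT : Finset TComp} {P : Finset SComp} (hcompat : compat (CT.image tItf ∪ P.image sItf))
    (hm : definedPre undef m) (htgt : semStar tsem (CT ∪ P.image cc) m) :
    ∃ t, ssem ((CT.image tItf).image (bt m) ∪ P) t ∧
      (prefixOf m t ∨ precSet undef (P.image sItf) t m) := by
  have hCS : ((CT.image tItf).image (bt m)).image sItf = CT.image tItf :=
    image_image_of_leftInverse (hbtItf m) _
  have hP' : ((P.image sItf).image (bt m)).image sItf = P.image sItf :=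
    image_image_of_leftInverse (hbtItf m) _
  have hsrc : semStar ssem ((CT.image tItf).image (bt m) ∪ (P.image sItf).image (bt m)) m :=
    hbt.semStar_union hcc hm htgt
  have hmixed : semStar tsem (((CT.image tItf).image (bt m)).image cc ∪ P.image cc) m :=
    hrecomp.semStar_replace_context hfcc hcompat hCS hP' hm htgt hsrc
  exact hbcc.exists_trace_of_blamesProgram hblame hP' hm hmixed hsrc

end CompilationChain

theorem assumptions_imply_rscdcmd
    {E I SComp TComp : Type}
    [DecidableEq I] [DecidableEq SComp] [DecidableEq TComp]
    (undef : I → E) (sItf : SComp → I) (tItf : TComp → I)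
    (compat : Finset I → Prop) (cc : SComp → TComp)
    (ssem : Finset SComp → Trace E → Prop)
    (tsem : Finset TComp → Trace E → Prop)
    -- compilation preserves interfaces
    (hcc : ∀ C, tItf (cc C) = sItf C)
    -- every source trace contains at most one Undef event, only as last event
    (hwfS : ∀ W t, ssem W t → wfTrace undef t)
    -- all traces produced by the target semantics contain no Undef events
    (hTnoU : ∀ W t, tsem W t → noUndef undef t)
    -- (1) Back-translation
    (bt : List E → I → SComp)
    (hbtItf : ∀ m i, sItf (bt m i) = i)
    (hbt : ∀ (Iset : Finset I) (W : Finset TComp), W.image tItf = Iset →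
        ∀ m : List E, definedPre undef m → semStar tsem W m →
        (Iset.image (fun i => bt m i)).image sItf = Iset ∧
        semStar ssem (Iset.image (fun i => bt m i)) m)
    -- (2) Forward compiler correctness with separate compilation
    (hfcc : ∀ IC IP : Finset I, compat (IC ∪ IP) →
        ∀ C P : Finset SComp, C.image sItf = IC → P.image sItf = IP →
        ∀ m : List E, definedPre undef m →
        semStar ssem (C ∪ P) m → semStar tsem (C.image cc ∪ P.image cc) m)
    -- (3) Recomposition
    (hrecomp : ∀ IP IC : Finset I, ∀ P P' : Finset SComp,
        P.image sItf = IP → P'.image sItf = IP →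
        ∀ CT : Finset TComp, CT.image tItf = IC →
        ∀ CS : Finset SComp, CS.image sItf = IC →
        ∀ m : List E,
        semStar tsem (CT ∪ P.image cc) m →
        semStar tsem (CS.image cc ∪ P'.image cc) m →
        semStar tsem (CS.image cc ∪ P.image cc) m)
    -- (4) Backward compiler correctness with separate compilation and
    --     undefined behavior
    (hbcc : ∀ C P : Finset SComp, ∀ m : List E,
        semStar tsem (C.image cc ∪ P.image cc) m →
        ∃ t, ssem (C ∪ P) t ∧ (prefixOf m t ∨ precAny undef t m))
    -- (5) Blame
    (hblame : ∀ IC IP : Finset I, ∀ CS : Finset SComp, CS.image sItf = IC →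
        ∀ P P' : Finset SComp, P.image sItf = IP → P'.image sItf = IP →
        ∀ m : List E, definedPre undef m → ∀ t : Trace E,
        semStar ssem (CS ∪ P') m → ssem (CS ∪ P) t → precAny undef t m →
        (prefixOf m t ∨ precSet undef IP t m)) :
    RSCDCMD undef sItf tItf compat cc ssem tsem bt := by
  rintro _ _ hcompat P rfl CT rfl t ht m hmt
  rw [Finset.union_comm] at hcompat
  exact assumptions_imply_rscdcmd_general hcc hbtItf
    (fun W m hm hW => (hbt _ W rfl m hm hW).2)
    (fun C P hcompat => hfcc _ _ hcompat C P rfl rfl)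
    (fun P P' CS CT hP' hCS => hrecomp _ _ P P' rfl hP' CT rfl CS hCS)
    hbcc
    (fun CS P P' hP' => hblame _ _ CS rfl P P' rfl hP')
    hcompat (definedPre_of_prefixOf hmt (hTnoU _ t ht)) ⟨t, hmt, ht⟩

end Stmt1
end

section
/- A compilation chain satisfies RSC^DC if and only if it robustly preserves exactly the class Z_P: that is, RSC^DC holds if and only if for every source partial program P and every trace property π ∈ Z_P, whenever P robustly satisfies π in the source (for all source contexts C_S and traces t, C_S[P] ⇝ t implies t ∈ π), then P↓ robustly satisfies π in the target (for all target contexts C_T and traces t, C_T[P↓] ⇝ t implies t ∈ π). -/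
/-!
STATEMENT 3: RSC^DC holds iff the compilation chain robustly preserves exactly
the class Z_P.
-/

namespace Stmt3

/-- A trace is either a finite list of events or an infinite sequence of events. -/
abbrev Trace (E : Type) := List E ⊕ (ℕ → E)

/-- `prefixOf m t`: the finite trace prefix `m` is a prefix of the trace `t`. -/
def prefixOf {E : Type} (m : List E) : Trace E → Prop
  | .inl l => m <+: l
  | .inr f => ∀ i (h : i < m.length), m.get ⟨i, h⟩ = f i

/-- Well-formedness of a trace wrt the event `u = UndefP`: `u` occurs at most
once, and only as the last event (so never in an infinite trace). -/
def wf {E : Type} (u : E) : Trace E → Prop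
  | .inl l => ∀ i (h : i < l.length), l.get ⟨i, h⟩ = u → i + 1 = l.length
  | .inr f => ∀ n, f n ≠ u

/-- The type of (well-formed) traces: by assumption every trace contains
`UndefP` at most once and only as its last event. -/
abbrev WTrace (E : Type) (u : E) := { t : Trace E // wf u t }

/-- `m` is a prefix of the (well-formed) trace `t`. -/
def wPrefix {E : Type} {u : E} (m : List E) (t : WTrace E u) : Prop :=
  prefixOf m t.1

/-- `t ≺_P t'` (both traces): `t = m'·[UndefP]` for some finite `m' ≤ t'`. -/
def precP {E : Type} {u : E} (t t' : WTrace E u) : Prop :=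
  ∃ m' : List E, t.1 = Sum.inl (m' ++ [u]) ∧ wPrefix m' t'

/-- `t ≺_P m` (trace vs finite prefix): `t = m'·[UndefP]` for some `m' ≤ m`. -/
def precPList {E : Type} {u : E} (t : WTrace E u) (m : List E) : Prop :=
  ∃ m' : List E, t.1 = Sum.inl (m' ++ [u]) ∧ m' <+: m

/-- `π` is a safety property. -/
def Safety {E : Type} {u : E} (π : Set (WTrace E u)) : Prop :=
  ∀ t, t ∉ π → ∃ m : List E, wPrefix m t ∧ ∀ t', wPrefix m t' → t' ∉ π

/-- `π` is closed under extension of traces with undefined behavior in `P`. -/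
def ClosedP {E : Type} {u : E} (π : Set (WTrace E u)) : Prop :=
  ∀ t ∈ π, ∀ t', precP t t' → t' ∈ π

/-- `Z_P ≜ Safety ∩ Closed_{≺_P}`. -/
def ZP {E : Type} {u : E} (π : Set (WTrace E u)) : Prop :=
  Safety π ∧ ClosedP π

/-!
A set `S` of traces has a least `Z_P` property containing it, its `Z_P`-closure: the traces all of
whose finite prefixes `m` are matched by some `s ∈ S`, in the sense that `m ≤ s` or `s ≺_P m`.
RSC^DC says that the behaviors of `P↓` lie in the closure of the behaviors of `P`. The delicate
point is that the closure is closed under `≺_P`: if `k·[UndefP]` lies in it and `m` extends `k`,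
then the trace matching the prefix `k·[UndefP]` also matches `m`, because no trace properly
extends `k·[UndefP]`.
-/

theorem range_prefix_range_of_le {k n : ℕ} (h : k ≤ n) : List.range k <+: List.range n := by
  simpa only [List.take_range, min_eq_left h] using List.take_prefix k (List.range n)

section Prefixes

variable {E : Type} {u : E} {m m' : List E}

theorem prefixOf_inr_iff_exists {f : ℕ → E} :
    prefixOf m (.inr f) ↔ ∃ n, m <+: (List.range n).map f := by
  constructor
  · intro h
    refine ⟨m.length, List.prefix_iff_getElem.mpr ⟨by simp, fun i hi => ?_⟩⟩
    simpa using h i hi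
  · rintro ⟨n, h⟩ i hi
    simpa using h.getElem hi

theorem prefixOf_of_prefix {t : Trace E} (h : m <+: m') (ht : prefixOf m' t) : prefixOf m t := by
  cases t with
  | inl l => exact h.trans ht
  | inr f =>
    obtain ⟨n, hn⟩ := prefixOf_inr_iff_exists.mp ht
    exact prefixOf_inr_iff_exists.mpr ⟨n, h.trans hn⟩

theorem prefix_or_prefix_of_prefixOf {t : Trace E} (h : prefixOf m t) (h' : prefixOf m' t) :
    m <+: m' ∨ m' <+: m := by
  cases t with
  | inl l => exact List.prefix_or_prefix_of_prefix h h'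
  | inr f =>
    obtain ⟨n, hn⟩ := prefixOf_inr_iff_exists.mp h
    obtain ⟨n', hn'⟩ := prefixOf_inr_iff_exists.mp h'
    exact List.prefix_or_prefix_of_prefix
      (hn.trans ((range_prefix_range_of_le (le_max_left n n')).map f))
      (hn'.trans ((range_prefix_range_of_le (le_max_right n n')).map f))

theorem eq_inl_of_prefixOf_concat_undef {t : Trace E} (ht : wf u t)
    (h : prefixOf (m ++ [u]) t) : t = .inl (m ++ [u]) := by
  cases t with
  | inl l =>
    have hl : m ++ [u] <+: l := h
    have lt_length : m.length < l.length := by simpa using hl.length_le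
    have getElem_eq_undef : l[m.length] = u := by
      simpa using (hl.getElem (i := m.length) (by simp)).symm
    have length_eq : m.length + 1 = l.length := ht m.length lt_length getElem_eq_undef
    exact congrArg Sum.inl (hl.eq_of_length (by simpa using length_eq)).symm
  | inr f => exact absurd (by simpa using (h m.length (by simp)).symm) (ht m.length)

theorem precPList_of_prefix {t : WTrace E u} (h : m <+: m') (ht : precPList t m) :
    precPList t m' := by
  obtain ⟨k, hk, hkm⟩ := ht
  exact ⟨k, hk, hkm.trans h⟩

theorem precPList_of_wPrefix_concat_undef {t : WTrace E u} (h : wPrefix (m ++ [u]) t) :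
    precPList t m :=
  ⟨m, eq_inl_of_prefixOf_concat_undef t.2 h, List.prefix_rfl⟩

theorem precPList_of_precPList_concat_undef {t : WTrace E u} (h : precPList t (m ++ [u])) :
    precPList t m := by
  obtain ⟨k, hk, hkm⟩ := h
  rcases List.prefix_concat_iff.mp hkm with rfl | hkm
  · refine precPList_of_wPrefix_concat_undef ?_
    rw [wPrefix, hk]
    exact List.prefix_append _ _
  · exact ⟨k, hk, hkm⟩

end Prefixes

section Closure

variable {E : Type} {u : E} {S T π : Set (WTrace E u)}

/-- The `Z_P`-closure of a set `S` of traces: the least `Z_P` property containing `S`, described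
through finite prefixes in the way RSC^DC relates target traces to source traces. -/
def zpClosure (S : Set (WTrace E u)) : Set (WTrace E u) :=
  {t | ∀ m, wPrefix m t → ∃ s ∈ S, wPrefix m s ∨ precPList s m}

theorem subset_zpClosure : S ⊆ zpClosure S :=
  fun t ht _ hm => ⟨t, ht, Or.inl hm⟩

theorem safety_zpClosure : Safety (zpClosure S) := by
  intro t ht
  obtain ⟨m, hm, unmatched⟩ : ∃ m, wPrefix m t ∧ ¬∃ s ∈ S, wPrefix m s ∨ precPList s m := by
    simpa only [zpClosure, Set.mem_ofPred_eq, not_forall, exists_prop] using ht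
  exact ⟨m, hm, fun t' hm' ht' => unmatched (ht' m hm')⟩

theorem closedP_zpClosure : ClosedP (zpClosure S) := by
  rintro t ht t' ⟨k, hk, hkt'⟩ m hm
  have wPrefix_t {l : List E} (hl : l <+: k ++ [u]) : wPrefix l t := by
    rwa [wPrefix, hk]
  rcases prefix_or_prefix_of_prefixOf hm hkt' with hmk | hkm
  · exact ht m (wPrefix_t (hmk.trans (List.prefix_append _ _)))
  · obtain ⟨s, hs, matched⟩ := ht (k ++ [u]) (wPrefix_t List.prefix_rfl)
    have hsk : precPList s k :=
      matched.elim precPList_of_wPrefix_concat_undef precPList_of_precPList_concat_undef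
    exact ⟨s, hs, Or.inr (precPList_of_prefix hkm hsk)⟩

theorem zpClosure_subset (hπ : ZP π) (hS : S ⊆ π) : zpClosure S ⊆ π := by
  intro t ht
  by_contra htπ
  obtain ⟨m, hm, bad⟩ := hπ.1 t htπ
  obtain ⟨s, hs, hms | ⟨k, hk, hkm⟩⟩ := ht m hm
  · exact bad s hms (hS hs)
  · exact htπ (hπ.2 s (hS hs) t ⟨k, hk, prefixOf_of_prefix hkm hm⟩)

theorem subset_zpClosure_iff : T ⊆ zpClosure S ↔ ∀ π, ZP π → S ⊆ π → T ⊆ π :=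
  ⟨fun hT _ hπ hS => hT.trans (zpClosure_subset hπ hS),
    fun h => h _ ⟨safety_zpClosure, closedP_zpClosure⟩ subset_zpClosure⟩

end Closure

section Behaviors

variable {E : Type} {Ctx Prg : Type*} {u : E} {sem : Ctx → Prg → WTrace E u → Prop} {P : Prg}

/-- The traces that the partial program `P` can produce in some context; `P` robustly satisfies
`π` when these all lie in `π`. -/
def behaviors (sem : Ctx → Prg → WTrace E u → Prop) (P : Prg) : Set (WTrace E u) :=
  {t | ∃ C, sem C P t}

theorem behaviors_subset_iff {π : Set (WTrace E u)} :
    behaviors sem P ⊆ π ↔ ∀ C t, sem C P t → t ∈ π :=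
  ⟨fun h C _ ht => h ⟨C, ht⟩, fun h t ⟨C, ht⟩ => h C t ht⟩

theorem mem_zpClosure_behaviors_iff {t : WTrace E u} :
    t ∈ zpClosure (behaviors sem P) ↔
      ∀ m, wPrefix m t → ∃ C s, sem C P s ∧ (wPrefix m s ∨ precPList s m) := by
  simp only [zpClosure, behaviors, Set.mem_ofPred_eq, ← exists_and_right]
  simp only [exists_comm (α := Ctx)]

end Behaviors

/-- RSC^DC iff robust preservation of the class `Z_P`. -/
theorem rscdc_iff_robust_ZP_preservation
    {E Prog TProg SCtx TCtx : Type} (u : E)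
    (compile : Prog → TProg)
    (ssem : SCtx → Prog → WTrace E u → Prop)
    (tsem : TCtx → TProg → WTrace E u → Prop) :
    -- RSC^DC
    (∀ (P : Prog) (CT : TCtx) (t : WTrace E u), tsem CT (compile P) t →
      ∀ m : List E, wPrefix m t →
        ∃ (CS : SCtx) (t : WTrace E u), ssem CS P t ∧
          (wPrefix m t ∨ precPList t m))
    ↔
    -- robust preservation of every property in Z_P
    (∀ (P : Prog) (π : Set (WTrace E u)), ZP π →
      (∀ (CS : SCtx) (t : WTrace E u), ssem CS P t → t ∈ π) →
      (∀ (CT : TCtx) (t : WTrace E u), tsem CT (compile P) t → t ∈ π)) := by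
  refine forall_congr' fun P => ?_
  calc
    _ ↔ behaviors tsem (compile P) ⊆ zpClosure (behaviors ssem P) := by
      simp only [behaviors_subset_iff, mem_zpClosure_behaviors_iff]
    _ ↔ ∀ π, ZP π → behaviors ssem P ⊆ π → behaviors tsem (compile P) ⊆ π :=
      subset_zpClosure_iff
    _ ↔ _ := by
      simp only [behaviors_subset_iff]

end Stmt3
end

section
/- A compilation chain satisfies RSC if and only if it robustly preserves all safety properties: that is, RSC holds if and only if for every source partial program P and every safety property π, whenever for all source contexts C_S and traces t, C_S[P] ⇝ t implies t ∈ π, then for all target contexts C_T and traces t, C_T[P↓] ⇝ t implies t ∈ π. -/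
/-!
STATEMENT 4: RSC holds iff the compilation chain robustly preserves all safety
properties.
-/

namespace Stmt4

/-- A trace is either a finite list of events or an infinite sequence of events. -/
abbrev Trace (E : Type) := List E ⊕ (ℕ → E)

/-- `prefixOf m t`: the finite trace prefix `m` is a prefix of the trace `t`. -/
def prefixOf {E : Type} (m : List E) : Trace E → Prop
  | .inl l => m <+: l
  | .inr f => ∀ i (h : i < m.length), m.get ⟨i, h⟩ = f i

/-- `π` is a safety property. -/
def Safety {E : Type} (π : Set (Trace E)) : Prop :=
  ∀ t, t ∉ π → ∃ m : List E, prefixOf m t ∧ ∀ t', prefixOf m t' → t' ∉ π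

/-!
Among the safety properties containing a set `B` of traces there is a least one: the traces all of
whose finite prefixes are also prefixes of traces in `B`. RSC says that, for every program, the
target behaviours lie in this closure of the source behaviours, which is the same as lying in every
safety property that contains the source behaviours.
-/

section SafetyClosure

variable {E : Type} {B T π : Set (Trace E)}

/-- The safety closure of a set `B` of traces: the traces none of whose finite prefixes rules out
membership in `B`. Topologically, it is the closure of `B` when the sets of all extensions of a
finite prefix are taken as basic open sets. -/
def safetyClosure (B : Set (Trace E)) : Set (Trace E) :=
  {t | ∀ m, prefixOf m t → ∃ t' ∈ B, prefixOf m t'}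

theorem subset_safetyClosure : B ⊆ safetyClosure B :=
  fun t ht _ hm => ⟨t, ht, hm⟩

theorem safety_safetyClosure (B : Set (Trace E)) : Safety (safetyClosure B) := by
  intro t ht
  obtain ⟨m, hmt, hmB⟩ : ∃ m, prefixOf m t ∧ ¬∃ t' ∈ B, prefixOf m t' := by
    simpa only [safetyClosure, Set.mem_ofPred_eq, not_forall, exists_prop] using ht
  exact ⟨m, hmt, fun _ hmt' ht' => hmB (ht' m hmt')⟩

theorem Safety.safetyClosure_subset (hπ : Safety π) (hB : B ⊆ π) : safetyClosure B ⊆ π := by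
  intro t ht
  by_contra htπ
  obtain ⟨m, hmt, hbad⟩ := hπ t htπ
  obtain ⟨t', ht', hmt'⟩ := ht m hmt
  exact hbad t' hmt' (hB ht')

theorem isLeast_safetyClosure (B : Set (Trace E)) :
    IsLeast {π | Safety π ∧ B ⊆ π} (safetyClosure B) :=
  ⟨⟨safety_safetyClosure B, subset_safetyClosure⟩, fun _ hπ => hπ.1.safetyClosure_subset hπ.2⟩

theorem subset_safetyClosure_iff :
    T ⊆ safetyClosure B ↔ ∀ π, Safety π → B ⊆ π → T ⊆ π :=
  (le_isGLB_iff (isLeast_safetyClosure B).isGLB).trans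
    ⟨fun h _ hπ hB => h ⟨hπ, hB⟩, fun h π hπ => h π hπ.1 hπ.2⟩

end SafetyClosure

section RobustBehaviors

variable {E : Type} {Ctx Program : Type*} {sem : Ctx → Program → Trace E → Prop} {P : Program}

/-- The robust behaviours of a partial program `P`: the traces that `P` can produce when linked
with some context, in the source language or in the target language. -/
def robustBehaviors (sem : Ctx → Program → Trace E → Prop) (P : Program) : Set (Trace E) :=
  {t | ∃ C, sem C P t}

theorem robustBehaviors_subset_iff {π : Set (Trace E)} :
    robustBehaviors sem P ⊆ π ↔ ∀ C t, sem C P t → t ∈ π :=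
  ⟨fun h C _ ht => h ⟨C, ht⟩, fun h t ⟨C, ht⟩ => h C t ht⟩

theorem mem_safetyClosure_robustBehaviors {t : Trace E} :
    t ∈ safetyClosure (robustBehaviors sem P) ↔
      ∀ m, prefixOf m t → ∃ C t', sem C P t' ∧ prefixOf m t' :=
  forall₂_congr fun _ _ =>
    ⟨fun ⟨t', ⟨C, ht'⟩, hm⟩ => ⟨C, t', ht', hm⟩, fun ⟨C, t', ht', hm⟩ => ⟨t', ⟨C, ht'⟩, hm⟩⟩

end RobustBehaviors

/-- RSC iff robust preservation of all safety properties. -/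
theorem rsc_iff_robust_safety_preservation
    {E Prog TProg SCtx TCtx : Type}
    (compile : Prog → TProg)
    (ssem : SCtx → Prog → Trace E → Prop)
    (tsem : TCtx → TProg → Trace E → Prop) :
    -- RSC
    (∀ (P : Prog) (CT : TCtx) (t : Trace E), tsem CT (compile P) t →
      ∀ m : List E, prefixOf m t →
        ∃ (CS : SCtx) (t' : Trace E), ssem CS P t' ∧ prefixOf m t')
    ↔
    -- robust preservation of all safety properties
    (∀ (P : Prog) (π : Set (Trace E)), Safety π →
      (∀ (CS : SCtx) (t : Trace E), ssem CS P t → t ∈ π) →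
      (∀ (CT : TCtx) (t : Trace E), tsem CT (compile P) t → t ∈ π)) := by
  refine forall_congr' fun P => ?_
  calc
    _ ↔ robustBehaviors tsem (compile P) ⊆ safetyClosure (robustBehaviors ssem P) := by
      simp only [robustBehaviors_subset_iff, mem_safetyClosure_robustBehaviors]
    _ ↔ ∀ π, Safety π → robustBehaviors ssem P ⊆ π → robustBehaviors tsem (compile P) ⊆ π :=
      subset_safetyClosure_iff
    _ ↔ _ := by simp only [robustBehaviors_subset_iff]

end Stmt4
end

section
/- For any safety property π, the trace property π^{Z_P+} ≜ π ∩ { t | ∀ t', t ≺_P t' → t' ∈ π } is in Z_P (i.e., π^{Z_P+} is a safety property and belongs to Closed_{≺_P}), and π^{Z_P+} ⊆ π. -/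
/-!
STATEMENT 5: for any safety property π, the property
π^{Z_P+} ≜ π ∩ { t | ∀ t_1, t ≺_P t_1 → t_1 ∈ π } is in Z_P and π^{Z_P+} ⊆ π.
-/

namespace Stmt5

/-- A trace is either a finite list of events or an infinite sequence of events. -/
abbrev Trace (E : Type) := List E ⊕ (ℕ → E)

/-- `prefixOf m t`: the finite trace prefix `m` is a prefix of the trace `t`. -/
def prefixOf {E : Type} (m : List E) : Trace E → Prop
  | .inl l => m <+: l
  | .inr f => ∀ i (h : i < m.length), m.get ⟨i, h⟩ = f i

/-- Well-formedness of a trace wrt the event `u = UndefP`: `u` occurs at most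
once, and only as the last event (so never in an infinite trace). -/
def wf {E : Type} (u : E) : Trace E → Prop
  | .inl l => ∀ i (h : i < l.length), l.get ⟨i, h⟩ = u → i + 1 = l.length
  | .inr f => ∀ n, f n ≠ u

/-- The type of (well-formed) traces: by assumption every trace contains
`UndefP` at most once and only as its last event. -/
abbrev WTrace (E : Type) (u : E) := { t : Trace E // wf u t }

/-- `m` is a prefix of the (well-formed) trace `t`. -/
def wPrefix {E : Type} {u : E} (m : List E) (t : WTrace E u) : Prop :=
  prefixOf m t.1

/-- `t ≺_P t'` (both traces): `t = m'·[UndefP]` for some finite `m' ≤ t'`. -/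
def precP {E : Type} {u : E} (t t' : WTrace E u) : Prop :=
  ∃ m' : List E, t.1 = Sum.inl (m' ++ [u]) ∧ wPrefix m' t'

/-- `t ≺_P m` (trace vs finite prefix): `t = m'·[UndefP]` for some `m' ≤ m`. -/
def precPList {E : Type} {u : E} (t : WTrace E u) (m : List E) : Prop :=
  ∃ m' : List E, t.1 = Sum.inl (m' ++ [u]) ∧ m' <+: m

/-- `π` is a safety property. -/
def Safety {E : Type} {u : E} (π : Set (WTrace E u)) : Prop :=
  ∀ t, t ∉ π → ∃ m : List E, wPrefix m t ∧ ∀ t', wPrefix m t' → t' ∉ π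

/-- `π` is closed under extension of traces with undefined behavior in `P`. -/
def ClosedP {E : Type} {u : E} (π : Set (WTrace E u)) : Prop :=
  ∀ t ∈ π, ∀ t', precP t t' → t' ∈ π

/-- `Z_P ≜ Safety ∩ Closed_{≺_P}`. -/
def ZP {E : Type} {u : E} (π : Set (WTrace E u)) : Prop :=
  Safety π ∧ ClosedP π

/-- `π^{Z_P+} ≜ π ∩ { t | ∀ t_1, t ≺_P t_1 → t_1 ∈ π }`. -/
def zplus {E : Type} {u : E} (π : Set (WTrace E u)) : Set (WTrace E u) :=
  π ∩ { t | ∀ t_1, precP t t_1 → t_1 ∈ π }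

/-!
A trace ending in `u = UndefP` has no proper extension, so it is a bad prefix for every property
that omits it. Hence a property omitting only such traces is a safety property. The set intersected
with `π` in `zplus π` is of this kind, since every trace that fails its defining condition has a
`≺_P`-successor, and safety is preserved by intersection. Closure under `≺_P` comes from the
transitivity of `≺_P`.
-/

section WellFormed

variable {E : Type} {u : E}

theorem wf_inl_iff_notMem_dropLast {l : List E} : wf u (.inl l) ↔ u ∉ l.dropLast := by
  simp only [wf, List.get_eq_getElem, List.mem_iff_getElem, List.length_dropLast,
    List.getElem_dropLast, not_exists]
  constructor
  · intro h i hi hu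
    have hlast : i + 1 = l.length := h i (by omega) hu
    omega
  · intro h i hi hu
    by_contra hlast
    exact h i (by omega) hu

theorem notMem_of_wf_append_undef {m : List E} (h : wf u (.inl (m ++ [u]))) : u ∉ m := by
  simpa using wf_inl_iff_notMem_dropLast.mp h

theorem eq_of_prefixOf_append_undef {m : List E} {t : Trace E} (ht : wf u t)
    (h : prefixOf (m ++ [u]) t) : t = .inl (m ++ [u]) := by
  rcases t with l | f
  · obtain ⟨s, rfl⟩ : m ++ [u] <+: l := h
    have hu : u ∉ (m ++ [u] ++ s).dropLast := wf_inl_iff_notMem_dropLast.mp ht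
    obtain rfl : s = [] := by
      by_contra hs
      rw [List.dropLast_append_of_ne_nil hs] at hu
      exact hu (by simp)
    rw [List.append_nil]
  · have hu : u = f m.length := by simpa using h m.length (by simp)
    exact absurd hu.symm (ht m.length)

end WellFormed

theorem prefixOf.of_isPrefix {E : Type} {m n : List E} {t : Trace E} (hn : prefixOf n t)
    (hmn : m <+: n) : prefixOf m t := by
  rcases t with l | f
  · exact hmn.trans hn
  · intro i hi
    exact (hmn.getElem hi).trans (hn i (hi.trans_le hmn.length_le))

section TraceProperties

variable {E : Type} {u : E}

theorem precP.trans {t₁ t₂ t₃ : WTrace E u} (h₁₂ : precP t₁ t₂) (h₂₃ : precP t₂ t₃) :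
    precP t₁ t₃ := by
  obtain ⟨m, ht₁, hm⟩ := h₁₂
  obtain ⟨n, ht₂, hn⟩ := h₂₃
  have hu : u ∉ m := notMem_of_wf_append_undef (ht₁ ▸ t₁.2)
  have hm_le : m <+: n ++ [u] := by rwa [wPrefix, ht₂] at hm
  have hmn : m <+: n := (List.prefix_concat_iff.mp hm_le).resolve_left (by rintro rfl; simp at hu)
  exact ⟨m, ht₁, hn.of_isPrefix hmn⟩

theorem Safety.inter {π ρ : Set (WTrace E u)} (hπ : Safety π) (hρ : Safety ρ) :
    Safety (π ∩ ρ) := by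
  intro t ht
  rcases not_and_or.mp ht with ht | ht
  · obtain ⟨m, hm, hbad⟩ := hπ t ht
    exact ⟨m, hm, fun t' hmt' ht' => hbad t' hmt' ht'.1⟩
  · obtain ⟨m, hm, hbad⟩ := hρ t ht
    exact ⟨m, hm, fun t' hmt' ht' => hbad t' hmt' ht'.2⟩

theorem safety_of_forall_notMem_eq_append_undef {π : Set (WTrace E u)}
    (h : ∀ t ∉ π, ∃ m, t.1 = .inl (m ++ [u])) : Safety π := by
  intro t ht
  obtain ⟨m, hm⟩ := h t ht
  refine ⟨m ++ [u], ?_, fun t' hmt' => ?_⟩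
  · rw [wPrefix, hm]
    exact List.prefix_rfl
  · obtain rfl : t' = t := Subtype.ext ((eq_of_prefixOf_append_undef t'.2 hmt').trans hm.symm)
    exact ht

/-- The core of `π` under `≺_P`: the traces all of whose `≺_P`-successors lie in `π`. It need not
be contained in `π`, and `zplus π` is by definition `π ∩ precPCore π`. -/
def precPCore (π : Set (WTrace E u)) : Set (WTrace E u) :=
  { t | ∀ t', precP t t' → t' ∈ π }

theorem safety_precPCore (π : Set (WTrace E u)) : Safety (precPCore π) := by
  refine safety_of_forall_notMem_eq_append_undef fun t ht => ?_
  obtain ⟨_, ⟨m, hm, _⟩, _⟩ : ∃ t', precP t t' ∧ t' ∉ π := by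
    simpa only [precPCore, Set.mem_ofPred_eq, not_forall, exists_prop] using ht
  exact ⟨m, hm⟩

theorem closedP_precPCore (π : Set (WTrace E u)) : ClosedP (precPCore π) :=
  fun _ ht _ htt' t'' ht't'' => ht t'' (htt'.trans ht't'')

theorem Safety.zplus {π : Set (WTrace E u)} (hπ : Safety π) : Safety (zplus π) :=
  hπ.inter (safety_precPCore π)

theorem closedP_zplus (π : Set (WTrace E u)) : ClosedP (zplus π) :=
  fun t ht t' htt' => ⟨ht.2 t' htt', closedP_precPCore π t ht.2 t' htt'⟩

end TraceProperties

theorem zplus_mem_ZP_and_subset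
    {E : Type} (u : E) (π : Set (WTrace E u)) (hπ : Safety π) :
    ZP (zplus π) ∧ zplus π ⊆ π :=
  ⟨⟨hπ.zplus, closedP_zplus π⟩, Set.inter_subset_left⟩

end Stmt5
end

section
/- Suppose the compilation chain satisfies RSC^DC, π is a safety property, and P robustly satisfies π in the source (for all source contexts C_S and traces t, C_S[P] ⇝ t implies t ∈ π). Then P↓ robustly satisfies the weakened property π^{Z_P-} ≜ π ∪ { t' | ∃ t ∈ π, (t ≺_P t' ∨ t' ≤ t) } in the target: for all target contexts C_T and traces t, C_T[P↓] ⇝ t implies t ∈ π^{Z_P-} (here t' ≤ t means t' is a finite trace that is a prefix of t). -/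
/-!
STATEMENT 7: under RSC^DC, if P robustly satisfies a safety property π in the
source, then P↓ robustly satisfies the weakened property
π^{Z_P-} ≜ π ∪ { t_1 | ∃ t ∈ π, (t ≺_P t_1 ∨ t_1 ≤ t) } in the target.
-/

namespace Stmt7

/-- A trace is either a finite list of events or an infinite sequence of events. -/
abbrev Trace (E : Type) := List E ⊕ (ℕ → E)

/-- `prefixOf m t`: the finite trace prefix `m` is a prefix of the trace `t`. -/
def prefixOf {E : Type} (m : List E) : Trace E → Prop
  | .inl l => m <+: l
  | .inr f => ∀ i (h : i < m.length), m.get ⟨i, h⟩ = f i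

/-- Well-formedness of a trace wrt the event `u = UndefP`: `u` occurs at most
once, and only as the last event (so never in an infinite trace). -/
def wf {E : Type} (u : E) : Trace E → Prop
  | .inl l => ∀ i (h : i < l.length), l.get ⟨i, h⟩ = u → i + 1 = l.length
  | .inr f => ∀ n, f n ≠ u

/-- The type of (well-formed) traces: by assumption every trace contains
`UndefP` at most once and only as its last event. -/
abbrev WTrace (E : Type) (u : E) := { t : Trace E // wf u t }

/-- `m` is a prefix of the (well-formed) trace `t`. -/
def wPrefix {E : Type} {u : E} (m : List E) (t : WTrace E u) : Prop :=
  prefixOf m t.1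

/-- `t ≺_P t'` (both traces): `t = m'·[UndefP]` for some finite `m' ≤ t'`. -/
def precP {E : Type} {u : E} (t t' : WTrace E u) : Prop :=
  ∃ m' : List E, t.1 = Sum.inl (m' ++ [u]) ∧ wPrefix m' t'

/-- `t ≺_P m` (trace vs finite prefix): `t = m'·[UndefP]` for some `m' ≤ m`. -/
def precPList {E : Type} {u : E} (t : WTrace E u) (m : List E) : Prop :=
  ∃ m' : List E, t.1 = Sum.inl (m' ++ [u]) ∧ m' <+: m

/-- `π` is a safety property. -/
def Safety {E : Type} {u : E} (π : Set (WTrace E u)) : Prop :=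
  ∀ t, t ∉ π → ∃ m : List E, wPrefix m t ∧ ∀ t', wPrefix m t' → t' ∉ π

/-- `π` is closed under extension of traces with undefined behavior in `P`. -/
def ClosedP {E : Type} {u : E} (π : Set (WTrace E u)) : Prop :=
  ∀ t ∈ π, ∀ t', precP t t' → t' ∈ π

/-- `Z_P ≜ Safety ∩ Closed_{≺_P}`. -/
def ZP {E : Type} {u : E} (π : Set (WTrace E u)) : Prop :=
  Safety π ∧ ClosedP π

/-- `t_1 ≤ t`: `t_1` is a finite trace that is a prefix of `t`. -/
def finPrefix {E : Type} {u : E} (t_1 t : WTrace E u) : Prop :=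
  ∃ l : List E, t_1.1 = Sum.inl l ∧ wPrefix l t

/-- `π^{Z_P-} ≜ π ∪ { t_1 | ∃ t ∈ π, (t ≺_P t_1 ∨ t_1 ≤ t) }`. -/
def zminus {E : Type} {u : E} (π : Set (WTrace E u)) : Set (WTrace E u) :=
  π ∪ { t_1 | ∃ t ∈ π, precP t t_1 ∨ finPrefix t_1 t }

theorem prefixOf.of_prefix {E : Type} {m m' : List E} {t : Trace E}
    (hm : prefixOf m t) (h : m' <+: m) : prefixOf m' t := by
  cases t with
  | inl l => exact h.trans hm
  | inr f =>
    intro i hi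
    exact (h.getElem hi).trans (hm i (hi.trans_le h.length_le))

section

variable {E : Type} {u : E} {s t : WTrace E u} {π : Set (WTrace E u)}

theorem precPList.precP {m : List E} (hs : precPList s m) (hm : wPrefix m t) : precP s t :=
  let ⟨m', hsm', hm'⟩ := hs
  ⟨m', hsm', prefixOf.of_prefix hm hm'⟩

theorem Safety.mem_of_forall_wPrefix (hπ : Safety π)
    (h : ∀ m, wPrefix m t → ∃ s ∈ π, wPrefix m s) : t ∈ π := by
  by_contra ht
  obtain ⟨m, hmt, hbad⟩ := hπ t ht
  obtain ⟨s, hs, hms⟩ := h m hmt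
  exact hbad s hms hs

theorem Safety.mem_zminus_of_forall_wPrefix (hπ : Safety π)
    (h : ∀ m, wPrefix m t → ∃ s ∈ π, wPrefix m s ∨ precPList s m) : t ∈ zminus π := by
  by_cases hUB : ∃ s ∈ π, precP s t
  · obtain ⟨s, hs, hst⟩ := hUB
    exact Or.inr ⟨s, hs, Or.inl hst⟩
  · refine Or.inl (hπ.mem_of_forall_wPrefix fun m hmt => ?_)
    obtain ⟨s, hs, hms | hsm⟩ := h m hmt
    · exact ⟨s, hs, hms⟩
    · exact absurd ⟨s, hs, hsm.precP hmt⟩ hUB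

end

theorem rscdc_robustly_preserves_zminus
    {E Prog TProg SCtx TCtx : Type} (u : E)
    (compile : Prog → TProg)
    (ssem : SCtx → Prog → WTrace E u → Prop)
    (tsem : TCtx → TProg → WTrace E u → Prop)
    -- RSC^DC
    (hrsc : ∀ (P : Prog) (CT : TCtx) (t : WTrace E u), tsem CT (compile P) t →
      ∀ m : List E, wPrefix m t →
        ∃ (CS : SCtx) (t : WTrace E u), ssem CS P t ∧
          (wPrefix m t ∨ precPList t m))
    (P : Prog) (π : Set (WTrace E u)) (hπ : Safety π)
    -- P robustly satisfies π in the source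
    (hrob : ∀ (CS : SCtx) (t : WTrace E u), ssem CS P t → t ∈ π) :
    -- P↓ robustly satisfies π^{Z_P-} in the target
    ∀ (CT : TCtx) (t : WTrace E u), tsem CT (compile P) t → t ∈ zminus π := by
  intro CT t ht
  refine hπ.mem_zminus_of_forall_wPrefix fun m hmt => ?_
  obtain ⟨CS, s, hs, hms⟩ := hrsc P CT t ht m hmt
  exact ⟨s, hrob CS s hs, hms⟩

end Stmt7
end

section
/- The strengthened correspondence property S₁^{Z_P+} ≜ { t | ∀ m d x, (m·[Write d x] ≤ t ∨ m·[UndefP] ≤ t) → ∃ m', m'·[Read, Ret x] ≤ m } belongs to Z_P (it is a safety property and is in Closed_{≺_P}), and S₁^{Z_P+} ⊆ S₁ where S₁ ≜ { t | ∀ m d x, m·[Write d x] ≤ t → ∃ m', m'·[Read, Ret x] ≤ m }. -/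
/-!
STATEMENT 9: the strengthened correspondence property S₁^{Z_P+} belongs to Z_P
and S₁^{Z_P+} ⊆ S₁.
-/

namespace Stmt9

/-- A trace is either a finite list of events or an infinite sequence of events. -/
abbrev Trace (E : Type) := List E ⊕ (ℕ → E)

/-- `prefixOf m t`: the finite trace prefix `m` is a prefix of the trace `t`. -/
def prefixOf {E : Type} (m : List E) : Trace E → Prop
  | .inl l => m <+: l
  | .inr f => ∀ i (h : i < m.length), m.get ⟨i, h⟩ = f i

/-- Well-formedness of a trace wrt the event `u = UndefP`: `u` occurs at most
once, and only as the last event (so never in an infinite trace). -/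
def wf {E : Type} (u : E) : Trace E → Prop
  | .inl l => ∀ i (h : i < l.length), l.get ⟨i, h⟩ = u → i + 1 = l.length
  | .inr f => ∀ n, f n ≠ u

/-- The type of (well-formed) traces: by assumption every trace contains
`UndefP` at most once and only as its last event. -/
abbrev WTrace (E : Type) (u : E) := { t : Trace E // wf u t }

/-- `m` is a prefix of the (well-formed) trace `t`. -/
def wPrefix {E : Type} {u : E} (m : List E) (t : WTrace E u) : Prop :=
  prefixOf m t.1

/-- `t ≺_P t'` (both traces): `t = m'·[UndefP]` for some finite `m' ≤ t'`. -/
def precP {E : Type} {u : E} (t t' : WTrace E u) : Prop :=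
  ∃ m' : List E, t.1 = Sum.inl (m' ++ [u]) ∧ wPrefix m' t'

/-- `t ≺_P m` (trace vs finite prefix): `t = m'·[UndefP]` for some `m' ≤ m`. -/
def precPList {E : Type} {u : E} (t : WTrace E u) (m : List E) : Prop :=
  ∃ m' : List E, t.1 = Sum.inl (m' ++ [u]) ∧ m' <+: m

/-- `π` is a safety property. -/
def Safety {E : Type} {u : E} (π : Set (WTrace E u)) : Prop :=
  ∀ t, t ∉ π → ∃ m : List E, wPrefix m t ∧ ∀ t', wPrefix m t' → t' ∉ π

/-- `π` is closed under extension of traces with undefined behavior in `P`. -/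
def ClosedP {E : Type} {u : E} (π : Set (WTrace E u)) : Prop :=
  ∀ t ∈ π, ∀ t', precP t t' → t' ∈ π

/-- `Z_P ≜ Safety ∩ Closed_{≺_P}`. -/
def ZP {E : Type} {u : E} (π : Set (WTrace E u)) : Prop :=
  Safety π ∧ ClosedP π

/-- `S₁ ≜ { t | ∀ m d x, m·[Write d x] ≤ t → ∃ m_1, m_1·[Read, Ret x] ≤ m }`. -/
def S1 {E Val : Type} {u : E} (read : E) (ret : Val → E) (write : Val → Val → E) :
    Set (WTrace E u) :=
  { t | ∀ (m : List E) (d x : Val), wPrefix (m ++ [write d x]) t →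
        ∃ m_1 : List E, (m_1 ++ [read, ret x]) <+: m }

/-- `S₁^{Z_P+} ≜ { t | ∀ m d x, (m·[Write d x] ≤ t ∨ m·[UndefP] ≤ t) →
∃ m_1, m_1·[Read, Ret x] ≤ m }`. -/
def S1plus {E Val : Type} {u : E} (read : E) (ret : Val → E) (write : Val → Val → E) :
    Set (WTrace E u) :=
  { t | ∀ (m : List E) (d x : Val),
        (wPrefix (m ++ [write d x]) t ∨ wPrefix (m ++ [u]) t) →
        ∃ m_1 : List E, (m_1 ++ [read, ret x]) <+: m }

/-!
A trace violates a property of the form "every event `e` occurs only after a history `m` with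
`R m e`" at some prefix `m·[e]`, and every extension of that prefix violates it too: hence safety.

For closure, let `t = m'·[UndefP]` be in the property and `m' ≤ t'`. An event of `t'` either lies
inside `m'`, and so occurs in `t` with the same history, or its history extends `m'`, which as the
history of `UndefP` in `t` already contains `Read, Ret x` for every `x`.
-/

section Prefixes

variable {E : Type}

theorem prefix_of_prefixOf_of_length_le {a b : List E} {t : Trace E}
    (ha : prefixOf a t) (hb : prefixOf b t) (hab : a.length ≤ b.length) : a <+: b := by
  cases t with
  | inl l => exact List.prefix_of_prefix_length_le ha hb hab
  | inr f =>
    exact List.prefix_iff_getElem.2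
      ⟨hab, fun i hi => (ha i hi).trans (hb i (hi.trans_le hab)).symm⟩

theorem prefix_or_prefix_of_prefixOf {a b : List E} {t : Trace E}
    (ha : prefixOf a t) (hb : prefixOf b t) : a <+: b ∨ b <+: a :=
  (le_total a.length b.length).imp
    (prefix_of_prefixOf_of_length_le ha hb) (prefix_of_prefixOf_of_length_le hb ha)

theorem wPrefix_concat_or_of_precP {u : E} {t t' : WTrace E u} {m : List E} {e : E}
    (htt' : precP t t') (hm : wPrefix (m ++ [e]) t') :
    wPrefix (m ++ [e]) t ∨ ∃ m', m' <+: m ∧ wPrefix (m' ++ [u]) t := by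
  obtain ⟨m', ht, hm'⟩ := htt'
  have wPrefix_iff (l : List E) : wPrefix l t ↔ l <+: m' ++ [u] := by
    rw [wPrefix, ht, prefixOf]
  simp only [wPrefix_iff]
  rcases prefix_or_prefix_of_prefixOf hm hm' with inside | extends_m'
  · exact .inl (inside.trans (List.prefix_append _ _))
  · rcases List.prefix_concat_iff.1 extends_m' with rfl | history_extends
    · exact .inl (List.prefix_append _ _)
    · exact .inr ⟨m', history_extends, List.prefix_rfl⟩

end Prefixes

section Correspondence

variable {E : Type} {u : E}

/-- The correspondence property of `R`: an event `e` may occur only after a history `m` (the list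
of all preceding events) such that `R m e`. -/
def correspondence (u : E) (R : List E → E → Prop) : Set (WTrace E u) :=
  { t | ∀ m e, wPrefix (m ++ [e]) t → R m e }

theorem safety_correspondence (R : List E → E → Prop) : Safety (correspondence u R) := by
  intro t ht
  have ⟨m, e, hm, hR⟩ : ∃ m e, wPrefix (m ++ [e]) t ∧ ¬ R m e := by
    simpa [correspondence] using ht
  exact ⟨m ++ [e], hm, fun t' hm' ht' => hR (ht' m e hm')⟩

theorem closedP_correspondence {R : List E → E → Prop}
    (hR : ∀ m' m e, R m' u → m' <+: m → R m e) : ClosedP (correspondence u R) := by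
  intro t ht t' htt' m e hm
  rcases wPrefix_concat_or_of_precP htt' hm with hm | ⟨m', hm'm, hm'⟩
  · exact ht m e hm
  · exact hR m' m e (ht m' u hm') hm'm

theorem zp_correspondence {R : List E → E → Prop}
    (hR : ∀ m' m e, R m' u → m' <+: m → R m e) : ZP (correspondence u R) :=
  ⟨safety_correspondence R, closedP_correspondence hR⟩

end Correspondence

section S1plus

variable {E Val : Type} {u : E} (read : E) (ret : Val → E) (write : Val → Val → E)

theorem S1plus_eq_correspondence :
    S1plus (u := u) read ret write = correspondence u fun m e =>
      ∀ d x, e = write d x ∨ e = u → ∃ m₁ : List E, m₁ ++ [read, ret x] <+: m := by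
  ext t
  constructor
  · rintro ht m e hm d x (rfl | rfl)
    · exact ht m d x (.inl hm)
    · exact ht m d x (.inr hm)
  · rintro ht m d x (hm | hm)
    · exact ht m _ hm d x (.inl rfl)
    · exact ht m _ hm d x (.inr rfl)

theorem zp_S1plus : ZP (S1plus (u := u) read ret write) := by
  rw [S1plus_eq_correspondence]
  refine zp_correspondence fun m' m e hu hm'm d x _ => ?_
  obtain ⟨m₁, hm₁⟩ := hu d x (.inr rfl)
  exact ⟨m₁, hm₁.trans hm'm⟩

theorem S1plus_subset_S1 : S1plus (u := u) read ret write ⊆ S1 read ret write :=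
  fun _ ht m d x hm => ht m d x (.inl hm)

end S1plus

theorem S1plus_mem_ZP_and_subset_S1
    {E Val : Type} [Nonempty Val] (u : E)
    (read : E) (ret : Val → E) (write : Val → Val → E)
    -- the events Read, Ret x, Write d x and UndefP are pairwise distinct
    (h_read_undef : read ≠ u)
    (h_ret_undef : ∀ x, ret x ≠ u)
    (h_write_undef : ∀ d x, write d x ≠ u)
    (h_read_ret : ∀ x, read ≠ ret x)
    (h_read_write : ∀ d x, read ≠ write d x)
    (h_ret_write : ∀ x d y, ret x ≠ write d y)
    (h_ret_inj : Function.Injective ret)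
    (h_write_inj : ∀ d x d_1 x_1, write d x = write d_1 x_1 → d = d_1 ∧ x = x_1) :
    ZP (S1plus (u := u) read ret write) ∧
    S1plus (u := u) read ret write ⊆ S1 (u := u) read ret write :=
  ⟨zp_S1plus read ret write, S1plus_subset_S1 read ret write⟩

end Stmt9
end
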